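/- arXiv:cs/0312045 — 2 statements merged into one kernel-verified Lean document; each statement's English description precedes it below -/
import Mathlib

section
/- For any program Ω with weight constraints, the nondisjunctive translation [Ω]^{nd} is strongly equivalent to the translation [Ω]. -/
open Classical

/-- A literal: a propositional atom `a` or its classical negation `¬ a`. -/
inductive Lit (α : Type) where
  | pos : α → Lit α
  | neg : α → Lit α

/-- The atom of a literal. -/
def Lit.atom {α : Type} : Lit α → α
  | .pos a => a
  | .neg a => a

/-- Mapping literals along a map of atoms. -/
def Lit.map {α β : Type} (f : α → β) : Lit α → Lit β
  | .pos a => .pos (f a)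
  | .neg a => .neg (f a)

/-- A set of literals is consistent if it contains no pair `a`, `¬ a`. -/
def LitConsistent {α : Type} (Z : Set (Lit α)) : Prop :=
  ∀ a : α, ¬(Lit.pos a ∈ Z ∧ Lit.neg a ∈ Z)

/-- Formulas (nested expressions): elementary formulas are literals, `⊥` and `⊤`;
formulas are built from them using negation as failure `naf`, conjunction `conj`
and disjunction `disj`. -/
inductive Formula (α : Type) where
  | lit : Lit α → Formula α
  | fbot : Formula α
  | ftop : Formula α
  | naf : Formula α → Formula α
  | conj : Formula α → Formula α → Formula α
  | disj : Formula α → Formula α → Formula α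

/-- Satisfaction of a formula by a set of literals. -/
def Formula.sat {α : Type} (Z : Set (Lit α)) : Formula α → Prop
  | .lit l => l ∈ Z
  | .fbot => False
  | .ftop => True
  | .naf F => ¬ F.sat Z
  | .conj F G => F.sat Z ∧ G.sat Z
  | .disj F G => F.sat Z ∨ G.sat Z

/-- A rule with nested expressions: `head ← body`. -/
structure NRule (α : Type) where
  head : Formula α
  body : Formula α

/-- `Z` satisfies a program (a set of rules). -/
def progSat {α : Type} (Z : Set (Lit α)) (P : Set (NRule α)) : Prop :=
  ∀ r ∈ P, r.body.sat Z → r.head.sat Z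

/-- The reduct `F^Z` of a formula relative to a set of literals `Z`. -/
noncomputable def Formula.reduct {α : Type} (Z : Set (Lit α)) : Formula α → Formula α
  | .lit l => .lit l
  | .fbot => .fbot
  | .ftop => .ftop
  | .naf F => if F.sat Z then .fbot else .ftop
  | .conj F G => .conj (F.reduct Z) (G.reduct Z)
  | .disj F G => .disj (F.reduct Z) (G.reduct Z)

/-- The reduct `Π^Z` of a program. -/
noncomputable def progReduct {α : Type} (Z : Set (Lit α)) (P : Set (NRule α)) : Set (NRule α) :=
  (fun r : NRule α => NRule.mk (r.head.reduct Z) (r.body.reduct Z)) '' P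

/-- `Z` is minimal (under inclusion) among the consistent sets of literals satisfying `P`. -/
def MinimalSat {α : Type} (Z : Set (Lit α)) (P : Set (NRule α)) : Prop :=
  LitConsistent Z ∧ progSat Z P ∧
    ∀ Z' : Set (Lit α), LitConsistent Z' → progSat Z' P → Z' ⊆ Z → Z' = Z

/-- `Z` is an answer set for a program `P` with nested expressions:
`Z` is minimal among the consistent sets satisfying the reduct `P^Z`. -/
def AnswerSet {α : Type} (Z : Set (Lit α)) (P : Set (NRule α)) : Prop :=
  MinimalSat Z (progReduct Z P)

/-- Strong equivalence of programs with nested expressions. -/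
def StrongEq {α : Type} (P₁ P₂ : Set (NRule α)) : Prop :=
  ∀ P : Set (NRule α), ∀ Z : Set (Lit α), AnswerSet Z (P₁ ∪ P) ↔ AnswerSet Z (P₂ ∪ P)

/-- Multiple conjunction (the empty conjunction is `⊤`). -/
def bigConj {α : Type} : List (Formula α) → Formula α
  | [] => .ftop
  | F :: Fs => .conj F (bigConj Fs)

/-- Multiple disjunction (the empty disjunction is `⊥`). -/
def bigDisj {α : Type} : List (Formula α) → Formula α
  | [] => .fbot
  | F :: Fs => .disj F (bigDisj Fs)

/-- `⟨F₁,…,F_n⟩:X`: the disjunction over `I ∈ X` of the conjunctions of the `Fᵢ`, `i ∈ I`. -/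
noncomputable def angled {α : Type} {n : ℕ} (F : Fin n → Formula α) (X : Finset (Finset (Fin n))) :
    Formula α :=
  bigDisj (X.toList.map fun I => bigConj (I.toList.map F))
/-- A rule element: a literal (positive rule element) or a literal
prefixed with negation as failure (negative rule element). -/
inductive RElem (α : Type) where
  | pos : Lit α → RElem α
  | neg : Lit α → RElem α

/-- Satisfaction of a rule element by a set of literals. -/
def RElem.sat {α : Type} (Z : Set (Lit α)) : RElem α → Prop
  | .pos l => l ∈ Z
  | .neg l => l ∉ Z

/-- Whether a rule element is negative. -/
def RElem.isNegB {α : Type} : RElem α → Bool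
  | .pos _ => false
  | .neg _ => true

/-- The sum of the weights of the entries of `S` that are satisfied by `Z`. -/
noncomputable def weightSum {α : Type} (Z : Set (Lit α)) (S : List (RElem α × ℝ)) : ℝ :=
  (S.map fun p => if p.1.sat Z then p.2 else 0).sum

/-- A weight constraint `L ≤ {c₁=w₁,…,c_m=w_m} ≤ U` with nonnegative weights;
`L` and `U` may be `−∞`/`+∞`. -/
structure WConstraint (α : Type) where
  L : EReal
  S : List (RElem α × ℝ)
  U : EReal
  nonneg : ∀ p ∈ S, (0 : ℝ) ≤ p.2

/-- `Z` satisfies the weight constraint `L ≤ S ≤ U`. -/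
def WConstraint.sat {α : Type} (Z : Set (Lit α)) (C : WConstraint α) : Prop :=
  C.L ≤ (weightSum Z C.S : EReal) ∧ (weightSum Z C.S : EReal) ≤ C.U

/-- A rule with weight constraints, `C₀ ← C₁,…,C_n`. -/
structure WRule (α : Type) where
  head : WConstraint α
  body : List (WConstraint α)

/-- `Z` satisfies a program with weight constraints. -/
def wProgSat {α : Type} (Z : Set (Lit α)) (Ω : Set (WRule α)) : Prop :=
  ∀ R ∈ Ω, (∀ C ∈ R.body, C.sat Z) → R.head.sat Z

/-- A weight constraint of the form `L ≤ S` (no upper bound), with nonnegative weights. -/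
structure LConstraint (α : Type) where
  L : EReal
  S : List (RElem α × ℝ)
  nonneg : ∀ p ∈ S, (0 : ℝ) ≤ p.2

/-- Satisfaction of a lower-bound constraint (by an arbitrary set of literals). -/
def LConstraint.sat {α : Type} (Z : Set (Lit α)) (C : LConstraint α) : Prop :=
  C.L ≤ (weightSum Z C.S : EReal)

/-- A Horn rule: a literal as head, lower-bound constraints as body. -/
structure HornRule (α : Type) where
  head : Lit α
  body : List (LConstraint α)

/-- Satisfaction of a set of Horn rules by an arbitrary set of literals. -/
def hornSat {α : Type} (Z : Set (Lit α)) (P : Set (HornRule α)) : Prop :=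
  ∀ r ∈ P, (∀ C ∈ r.body, C.sat Z) → r.head ∈ Z

/-- The deductive closure of a set of Horn rules: its unique minimal satisfying
set of literals (the intersection of all satisfying sets). -/
def cl {α : Type} (P : Set (HornRule α)) : Set (Lit α) :=
  ⋂₀ {Z : Set (Lit α) | hornSat Z P}

/-- The sum of the weights of the negative entries of `S` satisfied by `Z`. -/
noncomputable def negSatWeight {α : Type} (Z : Set (Lit α)) (S : List (RElem α × ℝ)) : ℝ :=
  (S.map fun p => if p.1.isNegB = true ∧ p.1.sat Z then p.2 else 0).sum

/-- The reduct `(L ≤ S)^Z` of a lower-bound constraint: drop the negative entries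
of `S` and decrease `L` by the total weight of the negative entries satisfied by `Z`. -/
noncomputable def LConstraint.reduct {α : Type} (Z : Set (Lit α)) (C : LConstraint α) :
    LConstraint α :=
  ⟨C.L - ((negSatWeight Z C.S : ℝ) : EReal),
   C.S.filter (fun p => !p.1.isNegB),
   fun p hp => C.nonneg p (List.mem_of_mem_filter hp)⟩

/-- The lower-bound part `L ≤ S` of a weight constraint `L ≤ S ≤ U`. -/
def WConstraint.lower {α : Type} (C : WConstraint α) : LConstraint α :=
  ⟨C.L, C.S, C.nonneg⟩

/-- The positive rule elements (as literals) occurring in `S`. -/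
def posElems {α : Type} (S : List (RElem α × ℝ)) : Set (Lit α) :=
  {l : Lit α | ∃ w : ℝ, (RElem.pos l, w) ∈ S}

/-- The reduct `Ω^Z` of a program with weight constraints: for each rule
`L₀≤S₀≤U₀ ← C₁,…,C_n` whose upper bounds are all satisfied by `Z`, the Horn rules
`l ← C₁^Z,…,C_n^Z` for all positive rule elements `l` of `S₀` with `l ∈ Z`. -/
noncomputable def wProgReduct {α : Type} (Z : Set (Lit α)) (Ω : Set (WRule α)) :
    Set (HornRule α) :=
  { r : HornRule α | ∃ R ∈ Ω,
      (∀ C ∈ R.body, (weightSum Z C.S : EReal) ≤ C.U) ∧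
      r.head ∈ posElems R.head.S ∧ r.head ∈ Z ∧
      r.body = R.body.map (fun C => C.lower.reduct Z) }

/-- `Z` is an answer set for the program `Ω` with weight constraints. -/
def WAnswerSet {α : Type} (Z : Set (Lit α)) (Ω : Set (WRule α)) : Prop :=
  LitConsistent Z ∧ wProgSat Z Ω ∧ cl (wProgReduct Z Ω) = Z

/-- Strong equivalence of programs with weight constraints. -/
def WStrongEq {α : Type} (Ω₁ Ω₂ : Set (WRule α)) : Prop :=
  ∀ Ω : Set (WRule α), ∀ Z : Set (Lit α), WAnswerSet Z (Ω₁ ∪ Ω) ↔ WAnswerSet Z (Ω₂ ∪ Ω)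

/-- A rule element as a formula: `l` becomes the literal `l`, `not l` becomes `naf l`. -/
def RElem.toFormula {α : Type} : RElem α → Formula α
  | .pos l => .lit l
  | .neg l => .naf (.lit l)

/-- The translation `[L ≤ S]`: the formula `⟨c₁,…,c_m⟩:{I : L ≤ Σ_{i∈I} wᵢ}`. -/
noncomputable def trLower {α : Type} (L : EReal) (S : List (RElem α × ℝ)) : Formula α :=
  angled (fun i : Fin S.length => (S.get i).1.toFormula)
    (Finset.univ.filter fun I : Finset (Fin S.length) =>
      L ≤ ((∑ i ∈ I, (S.get i).2 : ℝ) : EReal))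

/-- The translation `[S ≤ U]`: the formula `not ⟨c₁,…,c_m⟩:{I : U < Σ_{i∈I} wᵢ}`. -/
noncomputable def trUpper {α : Type} (S : List (RElem α × ℝ)) (U : EReal) : Formula α :=
  .naf (angled (fun i : Fin S.length => (S.get i).1.toFormula)
    (Finset.univ.filter fun I : Finset (Fin S.length) =>
      U < ((∑ i ∈ I, (S.get i).2 : ℝ) : EReal)))

/-- The translation `[L ≤ S ≤ U] = [L ≤ S],[S ≤ U]`. -/
noncomputable def trWC {α : Type} (C : WConstraint α) : Formula α :=
  .conj (trLower C.L C.S) (trUpper C.S C.U)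

/-- The formulas `l ; not l` for the positive rule elements `l` of `S`, in order. -/
def choiceFmls {α : Type} (S : List (RElem α × ℝ)) : List (Formula α) :=
  S.filterMap fun p =>
    match p.1 with
    | RElem.pos l => some (Formula.disj (.lit l) (.naf (.lit l)))
    | RElem.neg _ => none

/-- The translation of a rule with weight constraints `C₀ ← C₁,…,C_n`:
`(l₁; not l₁),…,(l_p; not l_p),[C₀] ← [C₁],…,[C_n]`. -/
noncomputable def trRule {α : Type} (R : WRule α) : NRule α :=
  ⟨bigConj (choiceFmls R.head.S ++ [trWC R.head]), bigConj (R.body.map trWC)⟩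

/-- The translation `[Ω]` of a program with weight constraints. -/
noncomputable def trProg {α : Type} (Ω : Set (WRule α)) : Set (NRule α) :=
  trRule '' Ω

/-- The nondisjunctive translation `[Ω]^{nd}`: each rule `C₀ ← C₁,…,C_n` is replaced
by the rules `l ← not not l, [C₁],…,[C_n]` for all positive rule elements `l` of `C₀`
together with `⊥ ← not [C₀], [C₁],…,[C_n]`. -/
noncomputable def ndTrans {α : Type} (Ω : Set (WRule α)) : Set (NRule α) :=
  { r : NRule α | ∃ R ∈ Ω,
      (∃ l ∈ posElems R.head.S,
        r = ⟨.lit l, bigConj (.naf (.naf (.lit l)) :: R.body.map trWC)⟩) ∨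
      r = ⟨.fbot, bigConj (.naf (trWC R.head) :: R.body.map trWC)⟩ }

/-!
Strong equivalence only depends on which subsets `Y` of a consistent set `Z` satisfy the reduct
relative to `Z`. Fix such `Y ⊆ Z` and a rule `C₀ ← C₁,…,C_n` whose body, reduced relative to `Z`,
holds in `Y`. The choice formulas `l; not l` in the head of the translated rule, and equally the
rules `l ← not not l, …` of the nondisjunctive translation, say that `Y` contains every positive
rule element of `C₀` that lies in `Z`. Then `Y` and `Z` agree on the positive rule elements of
`C₀`, so the reduct of `[C₀]` holds in `Y` if and only if `[C₀]` holds in `Z`, which is what the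
constraint `⊥ ← not [C₀], …` says.
-/

namespace Formula

variable {α : Type} {Y Z : Set (Lit α)}

@[simp]
theorem sat_reduct_lit {l : Lit α} : ((lit l).reduct Z).sat Y ↔ l ∈ Y :=
  Iff.rfl

@[simp]
theorem sat_reduct_conj {F G : Formula α} :
    ((conj F G).reduct Z).sat Y ↔ (F.reduct Z).sat Y ∧ (G.reduct Z).sat Y :=
  Iff.rfl

@[simp]
theorem sat_reduct_disj {F G : Formula α} :
    ((disj F G).reduct Z).sat Y ↔ (F.reduct Z).sat Y ∨ (G.reduct Z).sat Y :=
  Iff.rfl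

@[simp]
theorem sat_reduct_naf {F : Formula α} : ((naf F).reduct Z).sat Y ↔ ¬ F.sat Z := by
  by_cases h : F.sat Z <;> simp [reduct, sat, h]

theorem sat_reduct_choice {l : Lit α} :
    ((disj (lit l) (naf (lit l))).reduct Z).sat Y ↔ (l ∈ Z → l ∈ Y) := by
  simp [sat, or_iff_not_imp_right]

theorem sat_reduct_self {F : Formula α} : (F.reduct Z).sat Z ↔ F.sat Z := by
  induction F with
  | lit | fbot | ftop => rfl
  | naf F => exact sat_reduct_naf
  | conj F G ihF ihG => exact and_congr ihF ihG
  | disj F G ihF ihG => exact or_congr ihF ihG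

@[simp]
theorem sat_reduct_bigConj {Fs : List (Formula α)} :
    ((bigConj Fs).reduct Z).sat Y ↔ ∀ F ∈ Fs, (F.reduct Z).sat Y := by
  induction Fs with
  | nil => simp [bigConj, reduct, sat]
  | cons F Fs ih => simp [bigConj, ih]

@[simp]
theorem sat_reduct_bigDisj {Fs : List (Formula α)} :
    ((bigDisj Fs).reduct Z).sat Y ↔ ∃ F ∈ Fs, (F.reduct Z).sat Y := by
  induction Fs with
  | nil => simp [bigDisj, reduct, sat]
  | cons F Fs ih => simp [bigDisj, ih]

theorem sat_reduct_angled {n : ℕ} {F : Fin n → Formula α} {X : Finset (Finset (Fin n))} :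
    ((angled F X).reduct Z).sat Y ↔ ∃ I ∈ X, ∀ i ∈ I, ((F i).reduct Z).sat Y := by
  simp [angled]

end Formula

section StrongEquivalence

variable {α : Type} {Y Z : Set (Lit α)}

theorem progSat_progReduct {P : Set (NRule α)} :
    progSat Y (progReduct Z P) ↔
      ∀ r ∈ P, (r.body.reduct Z).sat Y → (r.head.reduct Z).sat Y := by
  simp [progSat, progReduct]

theorem progSat_progReduct_union {P Q : Set (NRule α)} :
    progSat Y (progReduct Z (P ∪ Q)) ↔
      progSat Y (progReduct Z P) ∧ progSat Y (progReduct Z Q) := by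
  simp only [progSat_progReduct, Set.mem_union, or_imp, forall_and]

theorem answerSet_congr {P Q : Set (NRule α)}
    (h : LitConsistent Z →
      ∀ Y ⊆ Z, progSat Y (progReduct Z P) ↔ progSat Y (progReduct Z Q)) :
    AnswerSet Z P ↔ AnswerSet Z Q := by
  refine and_congr_right fun hZ => and_congr (h hZ Z subset_rfl) ?_
  refine forall_congr' fun Y => imp_congr_right fun _ => ?_
  constructor <;> intro hmin hY hYZ
  · exact hmin ((h hZ Y hYZ).2 hY) hYZ
  · exact hmin ((h hZ Y hYZ).1 hY) hYZ

theorem strongEq_of_progSat_progReduct_iff {P₁ P₂ : Set (NRule α)}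
    (h : ∀ Z, LitConsistent Z →
      ∀ Y ⊆ Z, progSat Y (progReduct Z P₁) ↔ progSat Y (progReduct Z P₂)) :
    StrongEq P₁ P₂ := by
  intro P Z
  refine answerSet_congr fun hZ Y hY => ?_
  rw [progSat_progReduct_union, progSat_progReduct_union, h Z hZ Y hY]

end StrongEquivalence

section WeightConstraints

variable {α : Type} {Y Z : Set (Lit α)}

theorem mem_choiceFmls {S : List (RElem α × ℝ)} {F : Formula α} :
    F ∈ choiceFmls S ↔ ∃ l ∈ posElems S, .disj (.lit l) (.naf (.lit l)) = F := by
  rw [choiceFmls, List.mem_filterMap]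
  constructor
  · rintro ⟨⟨l | l, w⟩, hmem, hF⟩
    · exact ⟨l, ⟨w, hmem⟩, Option.some.inj hF⟩
    · cases hF
  · rintro ⟨l, ⟨w, hmem⟩, rfl⟩
    exact ⟨(.pos l, w), hmem, rfl⟩

theorem forall_mem_choiceFmls_sat_reduct {S : List (RElem α × ℝ)} :
    (∀ F ∈ choiceFmls S, (F.reduct Z).sat Y) ↔ posElems S ∩ Z ⊆ Y := by
  simp only [mem_choiceFmls, forall_exists_index, and_imp, forall_apply_eq_imp_iff₂,
    Formula.sat_reduct_choice, Set.subset_def, Set.mem_inter_iff]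

theorem sat_reduct_toFormula_congr {S : List (RElem α × ℝ)}
    (h : ∀ l ∈ posElems S, l ∈ Y ↔ l ∈ Z) {p : RElem α × ℝ} (hp : p ∈ S) :
    (p.1.toFormula.reduct Z).sat Y ↔ (p.1.toFormula.reduct Z).sat Z := by
  obtain ⟨l | l, w⟩ := p
  · exact h l ⟨w, hp⟩
  · simp only [RElem.toFormula, Formula.sat_reduct_naf]

theorem sat_reduct_trWC_iff {C : WConstraint α} (h : ∀ l ∈ posElems C.S, l ∈ Y ↔ l ∈ Z) :
    ((trWC C).reduct Z).sat Y ↔ (trWC C).sat Z := by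
  rw [← Formula.sat_reduct_self (F := trWC C)]
  simp only [trWC, trLower, trUpper, Formula.sat_reduct_conj, Formula.sat_reduct_naf,
    Formula.sat_reduct_angled, sat_reduct_toFormula_congr h (List.get_mem _ _)]

theorem sat_reduct_trRule_head_iff (hYZ : Y ⊆ Z) {R : WRule α} :
    ((trRule R).head.reduct Z).sat Y ↔
      posElems R.head.S ∩ Z ⊆ Y ∧ (trWC R.head).sat Z := by
  simp only [trRule, Formula.sat_reduct_bigConj, List.forall_mem_append,
    List.forall_mem_singleton, forall_mem_choiceFmls_sat_reduct]
  exact and_congr_right fun hpos =>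
    sat_reduct_trWC_iff fun l hl => ⟨fun hlY => hYZ hlY, fun hlZ => hpos ⟨hl, hlZ⟩⟩

theorem progSat_progReduct_trProg_iff (hYZ : Y ⊆ Z) {Ω : Set (WRule α)} :
    progSat Y (progReduct Z (trProg Ω)) ↔
      ∀ R ∈ Ω, (∀ C ∈ R.body, ((trWC C).reduct Z).sat Y) →
        posElems R.head.S ∩ Z ⊆ Y ∧ (trWC R.head).sat Z := by
  simp only [progSat_progReduct, trProg, Set.forall_mem_image, sat_reduct_trRule_head_iff hYZ]
  simp only [trRule, Formula.sat_reduct_bigConj, List.forall_mem_map]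

theorem progSat_progReduct_ndTrans_iff {Ω : Set (WRule α)} :
    progSat Y (progReduct Z (ndTrans Ω)) ↔
      ∀ R ∈ Ω, (∀ C ∈ R.body, ((trWC C).reduct Z).sat Y) →
        posElems R.head.S ∩ Z ⊆ Y ∧ (trWC R.head).sat Z := by
  rw [progSat_progReduct]
  constructor
  · intro h R hR hbody
    constructor
    · rintro l ⟨hl, hlZ⟩
      refine h _ ⟨R, hR, .inl ⟨l, hl, rfl⟩⟩ ?_
      simpa [Formula.sat] using ⟨hlZ, hbody⟩
    · by_contra hhead
      refine h _ ⟨R, hR, .inr rfl⟩ ?_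
      simpa using ⟨hhead, hbody⟩
  · rintro h _ ⟨R, hR, ⟨l, hl, rfl⟩ | rfl⟩ hbody
    · obtain ⟨hlZ, hbody⟩ : l ∈ Z ∧ ∀ C ∈ R.body, ((trWC C).reduct Z).sat Y := by
        simpa [Formula.sat] using hbody
      exact (h R hR hbody).1 ⟨hl, hlZ⟩
    · obtain ⟨hhead, hbody⟩ :
          ¬ (trWC R.head).sat Z ∧ ∀ C ∈ R.body, ((trWC C).reduct Z).sat Y := by
        simpa using hbody
      exact absurd (h R hR hbody).2 hhead

end WeightConstraints

theorem nd_strongly_equivalent_general {α : Type} (Ω : Set (WRule α)) :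
    StrongEq (ndTrans Ω) (trProg Ω) :=
  strongEq_of_progSat_progReduct_iff fun _ _ _ hYZ =>
    progSat_progReduct_ndTrans_iff.trans (progSat_progReduct_trProg_iff hYZ).symm

/-- Proposition: for any program `Ω` with weight constraints, the nondisjunctive
translation `[Ω]^{nd}` is strongly equivalent to the translation `[Ω]`. -/
theorem nd_strongly_equivalent (Ω : Set (WRule ℕ)) :
    StrongEq (ndTrans Ω) (trProg Ω) :=
  nd_strongly_equivalent_general Ω
end

section
/- For any program Ω with weight constraints, the map Z ↦ Z ∖ Q_Ω (removing from Z the atoms belonging to Q_Ω) is a bijection from the set of answer sets of the nonnested translation [Ω]^{nn} onto the set of answer sets of Ω. -/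
open Classical

/-- The atoms occurring in a formula. -/
def Formula.atoms {α : Type} : Formula α → Set α
  | .lit l => {l.atom}
  | .fbot => ∅
  | .ftop => ∅
  | .naf F => F.atoms
  | .conj F G => F.atoms ∪ G.atoms
  | .disj F G => F.atoms ∪ G.atoms

/-- The atom `a` occurs in the program `P`. -/
def atomOccurs {α : Type} (a : α) (P : Set (NRule α)) : Prop :=
  ∃ r ∈ P, a ∈ r.head.atoms ∨ a ∈ r.body.atoms

/-- The extended vocabulary for the nonnested translation: the original (base) atoms
together with the fresh negation atoms `q_{not l}` and weight atoms `q_{w≤S}`, `q_{w<S}`. -/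
inductive AtomX where
  | base : ℕ → AtomX
  | qnot : Lit ℕ → AtomX
  | qle : EReal → List (RElem ℕ × ℝ) → AtomX
  | qlt : EReal → List (RElem ℕ × ℝ) → AtomX

/-- An atom viewed as a formula. -/
def atomFml (a : AtomX) : Formula AtomX := .lit (.pos a)

/-- A rule element over the base atoms, as a formula over the extended vocabulary. -/
def reFmlX : RElem ℕ → Formula AtomX
  | .pos l => .lit (l.map AtomX.base)
  | .neg l => .naf (.lit (l.map AtomX.base))

/-- The total weight `w₁ + … + w_m` of `S`. -/
def sumW (S : List (RElem ℕ × ℝ)) : ℝ := (S.map Prod.snd).sum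

/-- A program is closed if it contains the defining rules for every weight atom
occurring in it: for `q_{w≤S}`, the fact `q_{w≤S}` if `w ≤ 0`, and the rules
`q_{w≤S} ← q_{w≤S'}` and `q_{w≤S} ← c_m, q_{w−w_m≤S'}` if `0 < w ≤ w₁+…+w_m`
(where `S = S' ++ [(c_m,w_m)]`); analogously for `q_{w<S}`. -/
def ClosedProg (P : Set (NRule AtomX)) : Prop :=
  (∀ (w : EReal) (S : List (RElem ℕ × ℝ)), atomOccurs (AtomX.qle w S) P →
    (w ≤ 0 → (⟨atomFml (.qle w S), .ftop⟩ : NRule AtomX) ∈ P) ∧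
    (0 < w → w ≤ ((sumW S : ℝ) : EReal) →
      ∃ (S' : List (RElem ℕ × ℝ)) (c : RElem ℕ) (wm : ℝ),
        S = S' ++ [(c, wm)] ∧
        (⟨atomFml (.qle w S), atomFml (.qle w S')⟩ : NRule AtomX) ∈ P ∧
        (⟨atomFml (.qle w S),
          .conj (reFmlX c) (atomFml (.qle (w - ((wm : ℝ) : EReal)) S'))⟩ :
            NRule AtomX) ∈ P)) ∧
  (∀ (w : EReal) (S : List (RElem ℕ × ℝ)), atomOccurs (AtomX.qlt w S) P →
    (w < 0 → (⟨atomFml (.qlt w S), .ftop⟩ : NRule AtomX) ∈ P) ∧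
    (0 ≤ w → w < ((sumW S : ℝ) : EReal) →
      ∃ (S' : List (RElem ℕ × ℝ)) (c : RElem ℕ) (wm : ℝ),
        S = S' ++ [(c, wm)] ∧
        (⟨atomFml (.qlt w S), atomFml (.qlt w S')⟩ : NRule AtomX) ∈ P ∧
        (⟨atomFml (.qlt w S),
          .conj (reFmlX c) (atomFml (.qlt (w - ((wm : ℝ) : EReal)) S'))⟩ :
            NRule AtomX) ∈ P))

/-- The nonnested translation `[L ≤ S ≤ U]^{nn} = q_{L≤S}, not q_{U<S}`. -/
def nnWC (C : WConstraint ℕ) : Formula AtomX :=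
  .conj (atomFml (.qle C.L C.S)) (.naf (atomFml (.qlt C.U C.S)))

/-- The basic rules of the nonnested translation: for every rule
`L₀≤S₀≤U₀ ← C₁,…,C_n` of `Ω`, the rules `q_{not l} ← not l` and
`l ← not q_{not l}, [C₁]^{nn},…,[C_n]^{nn}` for each positive rule element `l` of `S₀`,
and the rules `⊥ ← not q_{L₀≤S₀}, [C₁]^{nn},…,[C_n]^{nn}` and
`⊥ ← q_{U₀<S₀}, [C₁]^{nn},…,[C_n]^{nn}`. -/
def nnBase (Ω : Set (WRule ℕ)) : Set (NRule AtomX) :=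
  { r : NRule AtomX | ∃ R ∈ Ω,
      (∃ l ∈ posElems R.head.S,
        r = ⟨atomFml (.qnot l), .naf (.lit (l.map AtomX.base))⟩ ∨
        r = ⟨.lit (l.map AtomX.base),
             bigConj (.naf (atomFml (.qnot l)) :: R.body.map nnWC)⟩) ∨
      r = ⟨.fbot,
           bigConj (.naf (atomFml (.qle R.head.L R.head.S)) :: R.body.map nnWC)⟩ ∨
      r = ⟨.fbot,
           bigConj (atomFml (.qlt R.head.U R.head.S) :: R.body.map nnWC)⟩ }

/-- The nonnested translation `[Ω]^{nn}`: the smallest closed program containing the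
basic rules. -/
def nnTrans (Ω : Set (WRule ℕ)) : Set (NRule AtomX) :=
  ⋂₀ {P : Set (NRule AtomX) | nnBase Ω ⊆ P ∧ ClosedProg P}

/-- The new (fresh) atoms: negation atoms and weight atoms. -/
def AtomX.isNew : AtomX → Prop
  | .base _ => False
  | _ => True

/-- `Q_Ω`: the set of new atoms occurring in `[Ω]^{nn}`. -/
def QSet (Ω : Set (WRule ℕ)) : Set AtomX :=
  {a : AtomX | a.isNew ∧ atomOccurs a (nnTrans Ω)}

/-!
In an answer set of `[Ω]^{nn}`, the new atoms are determined by the literals of `Ω` it contains: by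
induction on the length of `S`, the weight rules derive `q_{w≤S}` exactly when the bound holds, and
`q_{not l}` is derived exactly when `l` is absent. Conversely, extend a set `Z` of literals by the
new atoms that are true in this sense. Among the models of the reduct of `[Ω]^{nn}` relative to the
extension of `Z`, only those obtained by extending some `Y ⊆ Z` matter, and such a `Y` has to be a
model of the Horn program `Ω^Z`. The extension of `Z` itself is a model iff `Z` satisfies `Ω`, and
it is then minimal iff `Z` is the deductive closure of `Ω^Z`.
-/

section Reduct

variable {α : Type} {Y Y' Z : Set (Lit α)}

theorem LitConsistent.mono (hZ : LitConsistent Z) (h : Y ⊆ Z) : LitConsistent Y :=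
  fun a ha => hZ a ⟨h ha.1, h ha.2⟩

theorem Formula.sat_reduct_naf_s5 (F : Formula α) :
    ((Formula.naf F).reduct Z).sat Y ↔ ¬ F.sat Z := by
  by_cases h : F.sat Z <;> simp [Formula.reduct, Formula.sat, h]

theorem Formula.sat_reduct_mono (h : Y ⊆ Y') (F : Formula α) :
    (F.reduct Z).sat Y → (F.reduct Z).sat Y' := by
  induction F with
  | lit l => exact fun hl => h hl
  | fbot => exact id
  | ftop => exact id
  | naf F _ => simp only [Formula.sat_reduct_naf_s5, imp_self]
  | conj F G hF hG => exact And.imp hF hG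
  | disj F G hF hG => exact Or.imp hF hG

theorem sat_reduct_bigConj (Fs : List (Formula α)) :
    ((bigConj Fs).reduct Z).sat Y ↔ ∀ F ∈ Fs, (F.reduct Z).sat Y := by
  induction Fs with
  | nil => simp [bigConj, Formula.reduct, Formula.sat]
  | cons F Fs ih => simp [bigConj, Formula.reduct, Formula.sat, ih]

theorem mem_atoms_bigConj {a : α} (Fs : List (Formula α)) :
    a ∈ (bigConj Fs).atoms ↔ ∃ F ∈ Fs, a ∈ F.atoms := by
  induction Fs with
  | nil => simp [bigConj, Formula.atoms]
  | cons F Fs ih => simp [bigConj, Formula.atoms, ih]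

/-- `Y` satisfies the reduct of the rule `r` relative to `Z`. -/
def NRule.SatReduct (Y Z : Set (Lit α)) (r : NRule α) : Prop :=
  (r.body.reduct Z).sat Y → (r.head.reduct Z).sat Y

theorem progSat_progReduct_iff {P : Set (NRule α)} :
    progSat Y (progReduct Z P) ↔ ∀ r ∈ P, r.SatReduct Y Z :=
  Set.forall_mem_image

theorem AnswerSet.subset_of_progSat {P : Set (NRule α)} (hZ : AnswerSet Z P)
    (hY : progSat Y (progReduct Z P)) (h : Y ⊆ Z) : Z ⊆ Y :=
  (hZ.2.2 Y (hZ.1.mono h) hY h).superset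

theorem atomOccurs.mono {a : α} {P Q : Set (NRule α)} (h : P ⊆ Q) (ha : atomOccurs a P) :
    atomOccurs a Q :=
  ha.imp fun _ hr => hr.imp_left (@h _)

end Reduct

section WeightConstraints

variable {α : Type} {Y Y' Z : Set (Lit α)} {S : List (RElem α × ℝ)} {Ω : Set (WRule α)}

/-- The total weight of the entries of `S` that hold in the reduct relative to `Z`: positive
rule elements are evaluated in `Y` and negative ones in `Z`. -/
noncomputable def reductWeightSum (Y Z : Set (Lit α)) (S : List (RElem α × ℝ)) : ℝ :=
  (S.map fun p => if (p.1.toFormula.reduct Z).sat Y then p.2 else 0).sum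

@[simp]
theorem RElem.sat_reduct_toFormula_pos (l : Lit α) :
    ((RElem.pos l).toFormula.reduct Z).sat Y ↔ l ∈ Y :=
  Iff.rfl

@[simp]
theorem RElem.sat_reduct_toFormula_neg (l : Lit α) :
    ((RElem.neg l).toFormula.reduct Z).sat Y ↔ l ∉ Z :=
  Formula.sat_reduct_naf_s5 _

@[simp]
theorem RElem.sat_pos (l : Lit α) : (RElem.pos l).sat Z ↔ l ∈ Z :=
  Iff.rfl

@[simp]
theorem RElem.sat_neg (l : Lit α) : (RElem.neg l).sat Z ↔ l ∉ Z :=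
  Iff.rfl

@[simp]
theorem RElem.isNegB_pos (l : Lit α) : (RElem.pos l).isNegB = false :=
  rfl

@[simp]
theorem RElem.isNegB_neg (l : Lit α) : (RElem.neg l).isNegB = true :=
  rfl

theorem RElem.sat_reduct_toFormula_self (c : RElem α) :
    (c.toFormula.reduct Z).sat Z ↔ c.sat Z := by
  cases c <;> simp

theorem reductWeightSum_self : reductWeightSum Z Z S = weightSum Z S := by
  simp only [reductWeightSum, weightSum, RElem.sat_reduct_toFormula_self]

theorem reductWeightSum_append_singleton (p : RElem α × ℝ) :
    reductWeightSum Y Z (S ++ [p]) =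
      reductWeightSum Y Z S + if (p.1.toFormula.reduct Z).sat Y then p.2 else 0 := by
  simp [reductWeightSum]

theorem reductWeightSum_mono (h : Y ⊆ Y') (hS : ∀ p ∈ S, (0 : ℝ) ≤ p.2) :
    reductWeightSum Y Z S ≤ reductWeightSum Y' Z S := by
  refine List.sum_le_sum fun p hp => ?_
  have hmono := Formula.sat_reduct_mono (Z := Z) h p.1.toFormula
  split_ifs with hY hY'
  exacts [le_rfl, absurd (hmono hY) hY', hS p hp, le_rfl]

theorem reductWeightSum_nonneg (hS : ∀ p ∈ S, (0 : ℝ) ≤ p.2) : 0 ≤ reductWeightSum Y Z S := by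
  refine List.sum_nonneg (List.forall_mem_map.2 fun p hp => ?_)
  split_ifs
  exacts [hS p hp, le_rfl]

theorem reductWeightSum_eq_add_negSatWeight :
    reductWeightSum Y Z S =
      weightSum Y (S.filter fun p => !p.1.isNegB) + negSatWeight Z S := by
  induction S with
  | nil => simp [reductWeightSum, weightSum, negSatWeight]
  | cons p S ih =>
    simp only [reductWeightSum, weightSum, negSatWeight] at ih
    obtain ⟨l | l, w⟩ := p
    · simp [reductWeightSum, weightSum, negSatWeight, ih, add_assoc]
    · simp [reductWeightSum, weightSum, negSatWeight, ih, add_left_comm]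

theorem LConstraint.sat_reduct_iff (C : LConstraint α) :
    (C.reduct Z).sat Y ↔ C.L ≤ (reductWeightSum Y Z C.S : EReal) := by
  rw [reductWeightSum_eq_add_negSatWeight, EReal.coe_add]
  exact EReal.sub_le_iff_le_add (by simp) (by simp)

theorem LConstraint.sat_reduct_mono (C : LConstraint α) (h : Y ⊆ Y')
    (hY : (C.reduct Z).sat Y) : (C.reduct Z).sat Y' := by
  rw [LConstraint.sat_reduct_iff] at hY ⊢
  exact hY.trans (EReal.coe_le_coe_iff.2 (reductWeightSum_mono h C.nonneg))

theorem hornSat_cl {P : Set (HornRule α)}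
    (hP : ∀ r ∈ P, ∀ C ∈ r.body, ∀ ⦃Y Y' : Set (Lit α)⦄, Y ⊆ Y' → C.sat Y → C.sat Y') :
    hornSat (cl P) P :=
  fun r hr hb _ hY =>
    hY r hr fun C hC => hP r hr C hC (Set.sInter_subset_of_mem hY) (hb C hC)

theorem hornSat_cl_wProgReduct : hornSat (cl (wProgReduct Z Ω)) (wProgReduct Z Ω) := by
  refine hornSat_cl ?_
  rintro ⟨l, _⟩ ⟨R, _, _, _, _, rfl⟩
  exact List.forall_mem_map.2 fun C _ _ _ h => C.lower.sat_reduct_mono h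

/-- `Y` satisfies the lower bounds of the reduct of the body of `R` relative to `Z`, and `Z` its
upper bounds. -/
def WRule.BodySatReduct (Y Z : Set (Lit α)) (R : WRule α) : Prop :=
  ∀ C ∈ R.body, (C.lower.reduct Z).sat Y ∧ (weightSum Z C.S : EReal) ≤ C.U

theorem WRule.bodySatReduct_self {R : WRule α} :
    R.BodySatReduct Z Z ↔ ∀ C ∈ R.body, C.sat Z := by
  simp only [WRule.BodySatReduct, LConstraint.sat_reduct_iff, reductWeightSum_self,
    WConstraint.sat, WConstraint.lower]

theorem WRule.BodySatReduct.mono {R : WRule α} (h : Y ⊆ Y') (hR : R.BodySatReduct Y Z) :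
    R.BodySatReduct Y' Z :=
  fun C hC => (hR C hC).imp_left (C.lower.sat_reduct_mono h)

theorem hornSat_wProgReduct_iff :
    hornSat Y (wProgReduct Z Ω) ↔
      ∀ R ∈ Ω, R.BodySatReduct Y Z → ∀ l ∈ posElems R.head.S, l ∈ Z → l ∈ Y := by
  constructor
  · intro h R hR hb l hl hlZ
    exact h ⟨l, R.body.map fun C => C.lower.reduct Z⟩ ⟨R, hR, fun C hC => (hb C hC).2, hl, hlZ, rfl⟩
      (List.forall_mem_map.2 fun C hC => (hb C hC).1)
  · rintro h ⟨l, _⟩ ⟨R, hR, hU, hl, hlZ, rfl⟩ hb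
    exact h R hR (fun C hC => ⟨List.forall_mem_map.1 hb C hC, hU C hC⟩) l hl hlZ

theorem hornSat_wProgReduct_self : hornSat Z (wProgReduct Z Ω) :=
  hornSat_wProgReduct_iff.2 fun _ _ _ _ _ => id

end WeightConstraints

/-- The two kinds of weight atoms, `q_{w≤S}` and `q_{w<S}`, which are treated uniformly. -/
inductive BoundKind where
  | le : BoundKind
  | lt : BoundKind

namespace BoundKind

/-- The comparison of a bound with a weight expressed by a kind of weight atoms. -/
def Rel : BoundKind → EReal → EReal → Prop
  | le, w, x => w ≤ x
  | lt, w, x => w < x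

/-- The weight atom `q_{w≤S}` or `q_{w<S}`. -/
def atom : BoundKind → EReal → List (RElem ℕ × ℝ) → AtomX
  | le => .qle
  | lt => .qlt

variable {k : BoundKind} {w x y : EReal}

theorem Rel.trans_le (h : k.Rel w x) (hxy : x ≤ y) : k.Rel w y := by
  cases k
  exacts [le_trans h hxy, lt_of_lt_of_le h hxy]

theorem rel_sub_coe_iff (a b : ℝ) : k.Rel (w - a) b ↔ k.Rel w ((b + a : ℝ) : EReal) := by
  rw [EReal.coe_add]
  cases k
  exacts [EReal.sub_le_iff_le_add (by simp) (by simp), EReal.sub_lt_iff (by simp) (by simp)]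

end BoundKind

section Translation

/-- The rule `q_{not l} ← not l`. -/
def negationRule (l : Lit ℕ) : NRule AtomX :=
  ⟨atomFml (.qnot l), .naf (.lit (l.map .base))⟩

/-- The rule `l ← not q_{not l}, [C₁]^{nn},…,[C_n]^{nn}`, where `C₁,…,C_n` is the body of `R`. -/
def choiceRule (R : WRule ℕ) (l : Lit ℕ) : NRule AtomX :=
  ⟨.lit (l.map .base), bigConj (.naf (atomFml (.qnot l)) :: R.body.map nnWC)⟩

/-- The rule `⊥ ← not q_{L₀≤S₀}, [C₁]^{nn},…,[C_n]^{nn}` for `R = L₀≤S₀≤U₀ ← C₁,…,C_n`. -/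
def lowerBoundRule (R : WRule ℕ) : NRule AtomX :=
  ⟨.fbot, bigConj (.naf (atomFml (.qle R.head.L R.head.S)) :: R.body.map nnWC)⟩

/-- The rule `⊥ ← q_{U₀<S₀}, [C₁]^{nn},…,[C_n]^{nn}` for `R = L₀≤S₀≤U₀ ← C₁,…,C_n`. -/
def upperBoundRule (R : WRule ℕ) : NRule AtomX :=
  ⟨.fbot, bigConj (atomFml (.qlt R.head.U R.head.S) :: R.body.map nnWC)⟩

/-- The fact `q_{w≤S}` (respectively `q_{w<S}`). -/
def weightFact (k : BoundKind) (w : EReal) (S : List (RElem ℕ × ℝ)) : NRule AtomX :=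
  ⟨atomFml (k.atom w S), .ftop⟩

/-- The rule `q_{w≤S} ← q_{w≤S'}` (respectively for `<`), where `S` is `S'` followed by `p`. -/
def weightSkipRule (k : BoundKind) (w : EReal) (S' : List (RElem ℕ × ℝ)) (p : RElem ℕ × ℝ) :
    NRule AtomX :=
  ⟨atomFml (k.atom w (S' ++ [p])), atomFml (k.atom w S')⟩

/-- The rule `q_{w≤S} ← c, q_{w-v≤S'}` (respectively for `<`), where `S` is `S'` followed by
`p = (c, v)`. -/
noncomputable def weightTakeRule (k : BoundKind) (w : EReal) (S' : List (RElem ℕ × ℝ))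
    (p : RElem ℕ × ℝ) : NRule AtomX :=
  ⟨atomFml (k.atom w (S' ++ [p])),
    .conj (reFmlX p.1) (atomFml (k.atom (w - (p.2 : EReal)) S'))⟩

variable {Ω : Set (WRule ℕ)}

theorem negationRule_mem_nnTrans {R : WRule ℕ} (hR : R ∈ Ω) {l : Lit ℕ}
    (hl : l ∈ posElems R.head.S) : negationRule l ∈ nnTrans Ω :=
  fun _ hP => hP.1 ⟨R, hR, .inl ⟨l, hl, .inl rfl⟩⟩

theorem choiceRule_mem_nnTrans {R : WRule ℕ} (hR : R ∈ Ω) {l : Lit ℕ}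
    (hl : l ∈ posElems R.head.S) : choiceRule R l ∈ nnTrans Ω :=
  fun _ hP => hP.1 ⟨R, hR, .inl ⟨l, hl, .inr rfl⟩⟩

theorem lowerBoundRule_mem_nnTrans {R : WRule ℕ} (hR : R ∈ Ω) : lowerBoundRule R ∈ nnTrans Ω :=
  fun _ hP => hP.1 ⟨R, hR, .inr (.inl rfl)⟩

theorem upperBoundRule_mem_nnTrans {R : WRule ℕ} (hR : R ∈ Ω) : upperBoundRule R ∈ nnTrans Ω :=
  fun _ hP => hP.1 ⟨R, hR, .inr (.inr rfl)⟩

theorem closedProg_iff {P : Set (NRule AtomX)} :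
    ClosedProg P ↔ ∀ (k : BoundKind) (w : EReal),
      (∀ S, atomOccurs (k.atom w S) P → k.Rel w 0 → weightFact k w S ∈ P) ∧
      ∀ S p, atomOccurs (k.atom w (S ++ [p])) P → ¬ k.Rel w 0 → k.Rel w (sumW (S ++ [p])) →
        weightSkipRule k w S p ∈ P ∧ weightTakeRule k w S p ∈ P := by
  have hkind : ClosedProg P ↔ ∀ (k : BoundKind) (w : EReal)
      (S : List (RElem ℕ × ℝ)), atomOccurs (k.atom w S) P →
        (k.Rel w 0 → weightFact k w S ∈ P) ∧
        (¬ k.Rel w 0 → k.Rel w (sumW S) → ∃ (S' : _) (c : _) (v : ℝ), S = S' ++ [(c, v)] ∧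
          (⟨atomFml (k.atom w S), atomFml (k.atom w S')⟩ : NRule AtomX) ∈ P ∧
          (⟨atomFml (k.atom w S), .conj (reFmlX c) (atomFml (k.atom (w - v) S'))⟩ :
            NRule AtomX) ∈ P) := by
    constructor
    · rintro ⟨hle, hlt⟩ (_ | _)
      · simp only [BoundKind.Rel, not_le]
        exact hle
      · simp only [BoundKind.Rel, not_lt]
        exact hlt
    · intro h
      have hle := h .le
      have hlt := h .lt
      simp only [BoundKind.Rel, not_le, not_lt] at hle hlt
      exact ⟨hle, hlt⟩
  rw [hkind]
  refine forall₂_congr fun k w => ⟨fun h => ⟨fun S hS => (h S hS).1, fun S p hS h₀ hw => ?_⟩,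
    fun h S hS => ⟨h.1 S hS, fun h₀ hw => ?_⟩⟩
  · obtain ⟨S', c, v, hS', hskip, htake⟩ := (h _ hS).2 h₀ hw
    obtain ⟨rfl, hp⟩ := List.append_inj' hS' rfl
    cases hp
    exact ⟨hskip, htake⟩
  · rcases List.eq_nil_or_concat' S with rfl | ⟨S', ⟨c, v⟩, rfl⟩
    · simp [sumW, h₀] at hw
    · exact ⟨S', c, v, rfl, h.2 S' (c, v) hS h₀ hw⟩

theorem closedProg_nnTrans (Ω : Set (WRule ℕ)) : ClosedProg (nnTrans Ω) := by
  refine closedProg_iff.2 fun k w => ⟨fun S hS h₀ P hP => ?_, fun S p hS h₀ hw => ?_⟩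
  · exact (closedProg_iff.1 hP.2 k w).1 S (hS.mono (Set.sInter_subset_of_mem hP)) h₀
  · have hmem : ∀ P, nnBase Ω ⊆ P ∧ ClosedProg P →
        weightSkipRule k w S p ∈ P ∧ weightTakeRule k w S p ∈ P := fun P hP =>
      (closedProg_iff.1 hP.2 k w).2 S p (hS.mono (Set.sInter_subset_of_mem hP)) h₀ hw
    exact ⟨fun P hP => (hmem P hP).1, fun P hP => (hmem P hP).2⟩

/-- An upper approximation of `[Ω]^{nn}`, made of the basic rules and all weight rules with
nonnegative weights. -/
inductive IsNNRule (Ω : Set (WRule ℕ)) : NRule AtomX → Prop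
  | negation {R l} : R ∈ Ω → l ∈ posElems R.head.S → IsNNRule Ω (negationRule l)
  | choice {R l} : R ∈ Ω → l ∈ posElems R.head.S → IsNNRule Ω (choiceRule R l)
  | lowerBound {R} : R ∈ Ω → IsNNRule Ω (lowerBoundRule R)
  | upperBound {R} : R ∈ Ω → IsNNRule Ω (upperBoundRule R)
  | fact {k w S} : (∀ p ∈ S, (0 : ℝ) ≤ p.2) → k.Rel w 0 → IsNNRule Ω (weightFact k w S)
  | skip {k w S p} : (∀ p' ∈ S ++ [p], (0 : ℝ) ≤ p'.2) → IsNNRule Ω (weightSkipRule k w S p)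
  | take {k w S p} : (∀ p' ∈ S ++ [p], (0 : ℝ) ≤ p'.2) → IsNNRule Ω (weightTakeRule k w S p)

/-- The atoms that may occur in `[Ω]^{nn}`: a negation atom has to come from a positive rule
element of a head, and a weight atom has to have nonnegative weights. -/
def AtomX.Admissible (Ω : Set (WRule ℕ)) : AtomX → Prop
  | .base _ => True
  | .qnot l => ∃ R ∈ Ω, l ∈ posElems R.head.S
  | .qle _ S => ∀ p ∈ S, (0 : ℝ) ≤ p.2
  | .qlt _ S => ∀ p ∈ S, (0 : ℝ) ≤ p.2

theorem BoundKind.admissible_atom_iff {k : BoundKind} {w : EReal} {S : List (RElem ℕ × ℝ)} :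
    (k.atom w S).Admissible Ω ↔ ∀ p ∈ S, (0 : ℝ) ≤ p.2 := by
  cases k <;> rfl

theorem Lit.admissible_atom_map_base (l : Lit ℕ) : (l.map AtomX.base).atom.Admissible Ω := by
  cases l <;> trivial

theorem admissible_of_mem_atoms_reFmlX (c : RElem ℕ) :
    ∀ a ∈ (reFmlX c).atoms, a.Admissible Ω := by
  rintro a ha
  cases c <;> cases ha <;> exact Lit.admissible_atom_map_base _

theorem admissible_of_mem_atoms_bigConj_nnWC {F : Formula AtomX}
    (hF : ∀ a ∈ F.atoms, a.Admissible Ω) (Cs : List (WConstraint ℕ)) :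
    ∀ a ∈ (bigConj (F :: Cs.map nnWC)).atoms, a.Admissible Ω := by
  intro a ha
  obtain ⟨G, hG, haG⟩ := (mem_atoms_bigConj _).1 ha
  rcases List.mem_cons.1 hG with rfl | hG
  · exact hF a haG
  · obtain ⟨C, -, rfl⟩ := List.mem_map.1 hG
    rcases haG with rfl | rfl <;> exact C.nonneg

theorem admissible_of_mem_atoms_atomFml {a : AtomX} (ha : a.Admissible Ω) :
    ∀ b ∈ (atomFml a).atoms, b.Admissible Ω := by
  rintro _ rfl
  exact ha

theorem IsNNRule.admissible {r : NRule AtomX} (hr : IsNNRule Ω r) {a : AtomX}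
    (ha : a ∈ r.head.atoms ∨ a ∈ r.body.atoms) : a.Admissible Ω := by
  cases hr with
  | @negation R l hR hl =>
    have hqnot : (AtomX.qnot l).Admissible Ω := ⟨R, hR, hl⟩
    exact ha.elim (admissible_of_mem_atoms_atomFml hqnot a)
      (by rintro rfl; exact Lit.admissible_atom_map_base _)
  | @choice R l hR hl =>
    have hqnot : (AtomX.qnot l).Admissible Ω := ⟨R, hR, hl⟩
    refine ha.elim (by rintro rfl; exact Lit.admissible_atom_map_base _)
      (admissible_of_mem_atoms_bigConj_nnWC ?_ _ a)
    exact admissible_of_mem_atoms_atomFml hqnot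
  | @lowerBound R hR =>
    refine ha.elim False.elim (admissible_of_mem_atoms_bigConj_nnWC ?_ _ a)
    exact admissible_of_mem_atoms_atomFml R.head.nonneg
  | @upperBound R hR =>
    refine ha.elim False.elim (admissible_of_mem_atoms_bigConj_nnWC ?_ _ a)
    exact admissible_of_mem_atoms_atomFml R.head.nonneg
  | fact hS _ =>
    exact ha.elim
      (admissible_of_mem_atoms_atomFml (BoundKind.admissible_atom_iff.2 hS) a) False.elim
  | skip hS =>
    have hS' := List.forall_mem_append.1 hS
    exact ha.elim (admissible_of_mem_atoms_atomFml (BoundKind.admissible_atom_iff.2 hS) a)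
      (admissible_of_mem_atoms_atomFml (BoundKind.admissible_atom_iff.2 hS'.1) a)
  | take hS =>
    have hS' := List.forall_mem_append.1 hS
    exact ha.elim (admissible_of_mem_atoms_atomFml (BoundKind.admissible_atom_iff.2 hS) a)
      (Or.rec (admissible_of_mem_atoms_reFmlX _ a)
        (admissible_of_mem_atoms_atomFml (BoundKind.admissible_atom_iff.2 hS'.1) a))

theorem isNNRule_of_mem_nnTrans {r : NRule AtomX} (hr : r ∈ nnTrans Ω) : IsNNRule Ω r := by
  have hnonneg {k : BoundKind} {w : EReal} {S : List (RElem ℕ × ℝ)}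
      (hS : atomOccurs (k.atom w S) {r | IsNNRule Ω r}) : ∀ p ∈ S, (0 : ℝ) ≤ p.2 :=
    have ⟨_, hr, ha⟩ := hS
    BoundKind.admissible_atom_iff.1 (hr.admissible ha)
  refine hr {r | IsNNRule Ω r} ⟨?_, closedProg_iff.2 fun k w => ⟨?_, ?_⟩⟩
  · rintro _ ⟨R, hR, ⟨l, hl, rfl | rfl⟩ | rfl | rfl⟩
    exacts [.negation hR hl, .choice hR hl, .lowerBound hR, .upperBound hR]
  · exact fun S hS h₀ => .fact (hnonneg hS) h₀
  · exact fun S p hS _ _ => ⟨.skip (hnonneg hS), .take (hnonneg hS)⟩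

theorem admissible_of_mem_QSet {a : AtomX} (ha : a ∈ QSet Ω) : a.Admissible Ω :=
  have ⟨_, hr, har⟩ := ha.2
  (isNNRule_of_mem_nnTrans hr).admissible har

theorem BoundKind.isNew_atom (k : BoundKind) (w : EReal) (S : List (RElem ℕ × ℝ)) :
    (k.atom w S).isNew := by
  cases k <;> trivial

theorem mem_QSet_of_head {a : AtomX} {F : Formula AtomX} (ha : a.isNew)
    (hr : ⟨atomFml a, F⟩ ∈ nnTrans Ω) : a ∈ QSet Ω :=
  ⟨ha, _, hr, .inl rfl⟩

theorem qnot_mem_QSet {R : WRule ℕ} (hR : R ∈ Ω) {l : Lit ℕ} (hl : l ∈ posElems R.head.S) :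
    .qnot l ∈ QSet Ω :=
  mem_QSet_of_head trivial (negationRule_mem_nnTrans hR hl)

theorem qle_head_mem_QSet {R : WRule ℕ} (hR : R ∈ Ω) : .qle R.head.L R.head.S ∈ QSet Ω :=
  ⟨trivial, _, lowerBoundRule_mem_nnTrans hR, .inr (.inl rfl)⟩

theorem qlt_head_mem_QSet {R : WRule ℕ} (hR : R ∈ Ω) : .qlt R.head.U R.head.S ∈ QSet Ω :=
  ⟨trivial, _, upperBoundRule_mem_nnTrans hR, .inr (.inl rfl)⟩

theorem mem_QSet_of_mem_atoms_nnWC {R : WRule ℕ} (hR : R ∈ Ω) {C : WConstraint ℕ}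
    (hC : C ∈ R.body) {a : AtomX} (ha : a.isNew) (haC : a ∈ (nnWC C).atoms) : a ∈ QSet Ω :=
  ⟨ha, _, lowerBoundRule_mem_nnTrans hR, .inr <| (mem_atoms_bigConj _).2
    ⟨nnWC C, List.mem_cons_of_mem _ (List.mem_map_of_mem hC), haC⟩⟩

end Translation

section Extension

variable {Ω : Set (WRule ℕ)} {Y Y' Z : Set (Lit ℕ)} {A B : Set (Lit AtomX)}

theorem Lit.map_base_injective : Function.Injective (Lit.map AtomX.base) := by
  rintro (a | a) (b | b) h <;> cases h <;> rfl

/-- The intended meaning of an atom in a reduct. As in `reductWeightSum`, the formulas `not l` are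
evaluated in the set `Z` the reduct is taken with, and everything else in `Y`. -/
def AtomX.Holds (Y Z : Set (Lit ℕ)) : AtomX → Prop
  | .base a => .pos a ∈ Y
  | .qnot l => l ∉ Z
  | .qle w S => w ≤ (reductWeightSum Y Z S : EReal)
  | .qlt w S => w < (reductWeightSum Y Z S : EReal)

/-- The extension of a set `Y` of literals by the atoms from `Q_Ω` that hold in the reduct relative
to `Z`. The extension of an answer set `Z` of `Ω` is `nnExtension Ω Z Z`; other sets `Y` are the
candidates for smaller models of the reduct. -/
def nnExtension (Ω : Set (WRule ℕ)) (Y Z : Set (Lit ℕ)) : Set (Lit AtomX) :=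
  Lit.map AtomX.base '' Y ∪ Lit.pos '' {a ∈ QSet Ω | a.Holds Y Z}

theorem BoundKind.holds_atom_iff {k : BoundKind} {w : EReal} {S : List (RElem ℕ × ℝ)} :
    (k.atom w S).Holds Y Z ↔ k.Rel w (reductWeightSum Y Z S) := by
  cases k <;> rfl

theorem AtomX.Holds.mono (h : Y ⊆ Y') {a : AtomX} (ha : a.Admissible Ω) (hY : a.Holds Y Z) :
    a.Holds Y' Z := by
  cases a with
  | base a => exact h hY
  | qnot l => exact hY
  | qle w S => exact le_trans hY (EReal.coe_le_coe_iff.2 (reductWeightSum_mono h ha))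
  | qlt w S => exact lt_of_lt_of_le hY (EReal.coe_le_coe_iff.2 (reductWeightSum_mono h ha))

theorem nnExtension_mono (h : Y ⊆ Y') : nnExtension Ω Y Z ⊆ nnExtension Ω Y' Z :=
  Set.union_subset_union (Set.image_mono h) <| Set.image_mono fun _ ha =>
    ⟨ha.1, ha.2.mono h (admissible_of_mem_QSet ha.1)⟩

theorem map_base_mem_nnExtension {l : Lit ℕ} : l.map .base ∈ nnExtension Ω Y Z ↔ l ∈ Y := by
  refine ⟨?_, fun hl => .inl ⟨l, hl, rfl⟩⟩
  rintro (⟨l', hl', h⟩ | ⟨a, ha, h⟩)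
  · rwa [← Lit.map_base_injective h]
  · cases l <;> cases h
    exact ha.1.1.elim

theorem preimage_nnExtension : Lit.map .base ⁻¹' nnExtension Ω Y Z = Y :=
  Set.ext fun _ => map_base_mem_nnExtension

theorem pos_mem_nnExtension {a : AtomX} (ha : a.isNew) :
    .pos a ∈ nnExtension Ω Y Z ↔ a ∈ QSet Ω ∧ a.Holds Y Z := by
  refine ⟨?_, fun h => .inr ⟨a, h, rfl⟩⟩
  rintro (⟨_ | _, _, h⟩ | ⟨_, hb, h⟩) <;> cases h
  exacts [ha.elim, hb]

theorem pos_qnot_mem_nnExtension {l : Lit ℕ} :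
    .pos (.qnot l) ∈ nnExtension Ω Y Z ↔ .qnot l ∈ QSet Ω ∧ l ∉ Z :=
  pos_mem_nnExtension (a := .qnot l) trivial

theorem BoundKind.pos_atom_mem_nnExtension {k : BoundKind} {w : EReal}
    {S : List (RElem ℕ × ℝ)} :
    .pos (k.atom w S) ∈ nnExtension Ω Y Z ↔
      k.atom w S ∈ QSet Ω ∧ k.Rel w (reductWeightSum Y Z S) := by
  rw [pos_mem_nnExtension (k.isNew_atom w S), holds_atom_iff]

theorem pos_qle_mem_nnExtension {w : EReal} {S : List (RElem ℕ × ℝ)} :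
    .pos (.qle w S) ∈ nnExtension Ω Y Z ↔
      .qle w S ∈ QSet Ω ∧ w ≤ (reductWeightSum Y Z S : EReal) :=
  BoundKind.pos_atom_mem_nnExtension (k := .le)

theorem pos_qlt_mem_nnExtension {w : EReal} {S : List (RElem ℕ × ℝ)} :
    .pos (.qlt w S) ∈ nnExtension Ω Y Z ↔
      .qlt w S ∈ QSet Ω ∧ w < (reductWeightSum Y Z S : EReal) :=
  BoundKind.pos_atom_mem_nnExtension (k := .lt)

theorem litConsistent_nnExtension_iff : LitConsistent (nnExtension Ω Y Z) ↔ LitConsistent Y := by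
  refine ⟨fun h a ha => h (.base a) ?_, ?_⟩
  · exact ha.imp (map_base_mem_nnExtension (l := .pos a)).2
      (map_base_mem_nnExtension (l := .neg a)).2
  · rintro h a ⟨hpos, ⟨_ | a, ha, ⟨⟩⟩ | ⟨_, _, ⟨⟩⟩⟩
    exact h a ⟨(map_base_mem_nnExtension (l := .pos a)).1 hpos, ha⟩

theorem sep_atom_notMem_QSet_nnExtension :
    {l ∈ nnExtension Ω Y Z | l.atom ∉ QSet Ω} = Lit.map AtomX.base '' Y := by
  ext l
  constructor
  · rintro ⟨hl | ⟨a, ha, rfl⟩, h⟩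
    exacts [hl, absurd ha.1 h]
  · rintro ⟨l, hl, rfl⟩
    refine ⟨map_base_mem_nnExtension.2 hl, fun h => ?_⟩
    cases l <;> exact h.1

theorem sat_reduct_reFmlX (c : RElem ℕ) :
    ((reFmlX c).reduct B).sat A ↔
      (c.toFormula.reduct (Lit.map .base ⁻¹' B)).sat (Lit.map .base ⁻¹' A) := by
  cases c with
  | pos l => rfl
  | neg l =>
    rw [RElem.sat_reduct_toFormula_neg]
    exact Formula.sat_reduct_naf_s5 _

theorem reductWeightSum_le_sumW {S : List (RElem ℕ × ℝ)} (hS : ∀ p ∈ S, (0 : ℝ) ≤ p.2) :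
    reductWeightSum Y Z S ≤ sumW S := by
  refine List.sum_le_sum fun p hp => ?_
  split_ifs
  exacts [le_rfl, hS p hp]

theorem BoundKind.pos_atom_mem_of_progSat (hA : progSat A (progReduct B (nnTrans Ω)))
    {k : BoundKind} (S : List (RElem ℕ × ℝ)) {w : EReal} (hQ : k.atom w S ∈ QSet Ω)
    (hw : k.Rel w (reductWeightSum (Lit.map .base ⁻¹' A) (Lit.map .base ⁻¹' B) S)) :
    .pos (k.atom w S) ∈ A := by
  rw [progSat_progReduct_iff] at hA
  have hclosed {w : EReal} := closedProg_iff.1 (closedProg_nnTrans Ω) k w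
  induction S using List.reverseRecOn generalizing w with
  | nil => exact hA _ (hclosed.1 [] hQ.2 (by simpa [reductWeightSum] using hw)) trivial
  | append_singleton S p ih =>
    by_cases h₀ : k.Rel w 0
    · exact hA _ (hclosed.1 _ hQ.2 h₀) trivial
    have hS := admissible_atom_iff.1 (admissible_of_mem_QSet hQ)
    obtain ⟨hskip, htake⟩ := hclosed.2 S p hQ.2 h₀
      (hw.trans_le (EReal.coe_le_coe_iff.2 (reductWeightSum_le_sumW hS)))
    rw [reductWeightSum_append_singleton] at hw
    split_ifs at hw with hp
    · refine hA _ htake ⟨(sat_reduct_reFmlX p.1).2 hp, ih ⟨k.isNew_atom _ _, _, htake, ?_⟩ ?_⟩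
      · exact .inr (.inr rfl)
      · exact (rel_sub_coe_iff _ _).2 hw
    · refine hA _ hskip (ih ⟨k.isNew_atom _ _, _, hskip, .inr rfl⟩ ?_)
      rwa [add_zero] at hw

theorem nnExtension_subset_of_progSat (hA : progSat A (progReduct B (nnTrans Ω))) :
    nnExtension Ω (Lit.map .base ⁻¹' A) (Lit.map .base ⁻¹' B) ⊆ A := by
  refine Set.union_subset (Set.image_preimage_subset _ _) ?_
  rintro _ ⟨a, ⟨haQ, ha⟩, rfl⟩
  cases a with
  | base a => exact ha
  | qnot l =>
    obtain ⟨R, hR, hl⟩ := admissible_of_mem_QSet haQ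
    exact progSat_progReduct_iff.1 hA _ (negationRule_mem_nnTrans hR hl)
      ((Formula.sat_reduct_naf_s5 _).2 ha)
  | qle w S => exact BoundKind.pos_atom_mem_of_progSat (k := .le) hA S haQ ha
  | qlt w S => exact BoundKind.pos_atom_mem_of_progSat (k := .lt) hA S haQ ha

theorem progSat_nnExtension_iff_basicRules :
    progSat (nnExtension Ω Y (Lit.map .base ⁻¹' B)) (progReduct B (nnTrans Ω)) ↔
      ∀ R ∈ Ω,
        (∀ l ∈ posElems R.head.S,
          (choiceRule R l).SatReduct (nnExtension Ω Y (Lit.map .base ⁻¹' B)) B) ∧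
        (lowerBoundRule R).SatReduct (nnExtension Ω Y (Lit.map .base ⁻¹' B)) B ∧
        (upperBoundRule R).SatReduct (nnExtension Ω Y (Lit.map .base ⁻¹' B)) B := by
  rw [progSat_progReduct_iff]
  refine ⟨fun h R hR => ⟨fun l hl => h _ (choiceRule_mem_nnTrans hR hl),
    h _ (lowerBoundRule_mem_nnTrans hR), h _ (upperBoundRule_mem_nnTrans hR)⟩, fun h r hr => ?_⟩
  cases isNNRule_of_mem_nnTrans hr with
  | choice hR hl => exact (h _ hR).1 _ hl
  | lowerBound hR => exact (h _ hR).2.1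
  | upperBound hR => exact (h _ hR).2.2
  | negation hR hl =>
    exact fun hb => pos_qnot_mem_nnExtension.2
      ⟨qnot_mem_QSet hR hl, (Formula.sat_reduct_naf_s5 _).1 hb⟩
  | @fact k w S hS h₀ =>
    refine fun _ => BoundKind.pos_atom_mem_nnExtension.2
      ⟨mem_QSet_of_head (k.isNew_atom w S) hr, h₀.trans_le ?_⟩
    exact EReal.coe_nonneg.2 (reductWeightSum_nonneg hS)
  | @skip k w S p hS =>
    refine fun hb => BoundKind.pos_atom_mem_nnExtension.2
      ⟨mem_QSet_of_head (k.isNew_atom _ _) hr,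
        (BoundKind.pos_atom_mem_nnExtension.1 hb).2.trans_le ?_⟩
    rw [reductWeightSum_append_singleton, EReal.coe_le_coe_iff]
    refine le_add_of_nonneg_right ?_
    split_ifs
    exacts [hS p (by simp), le_rfl]
  | @take k w S p hS =>
    rintro ⟨hp, hb⟩
    rw [sat_reduct_reFmlX, preimage_nnExtension] at hp
    refine BoundKind.pos_atom_mem_nnExtension.2 ⟨mem_QSet_of_head (k.isNew_atom _ _) hr, ?_⟩
    rw [reductWeightSum_append_singleton, if_pos hp, ← BoundKind.rel_sub_coe_iff]
    exact (BoundKind.pos_atom_mem_nnExtension.1 hb).2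

theorem sat_atomFml {a : AtomX} : (atomFml a).sat A ↔ .pos a ∈ A :=
  Iff.rfl

theorem sat_reduct_atomFml {a : AtomX} : ((atomFml a).reduct B).sat A ↔ .pos a ∈ A :=
  Iff.rfl

theorem sat_reduct_nnWC_nnExtension {C : WConstraint ℕ}
    (hC : ∀ a ∈ (nnWC C).atoms, a.isNew → a ∈ QSet Ω) :
    ((nnWC C).reduct (nnExtension Ω Z Z)).sat (nnExtension Ω Y Z) ↔
      (C.lower.reduct Z).sat Y ∧ (weightSum Z C.S : EReal) ≤ C.U := by
  have hqle : .qle C.L C.S ∈ QSet Ω := hC _ (.inl rfl) trivial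
  have hqlt : .qlt C.U C.S ∈ QSet Ω := hC _ (.inr rfl) trivial
  refine and_congr ?_ ((Formula.sat_reduct_naf_s5 _).trans ?_)
  · rw [sat_reduct_atomFml, pos_qle_mem_nnExtension, and_iff_right hqle,
      LConstraint.sat_reduct_iff]
    rfl
  · rw [sat_atomFml, pos_qlt_mem_nnExtension, and_iff_right hqlt, reductWeightSum_self, not_lt]

theorem sat_reduct_body_nnExtension {R : WRule ℕ} (hR : R ∈ Ω) (F : Formula AtomX) :
    ((bigConj (F :: R.body.map nnWC)).reduct (nnExtension Ω Z Z)).sat (nnExtension Ω Y Z) ↔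
      (F.reduct (nnExtension Ω Z Z)).sat (nnExtension Ω Y Z) ∧ R.BodySatReduct Y Z := by
  rw [sat_reduct_bigConj, List.forall_mem_cons, List.forall_mem_map]
  exact and_congr_right fun _ => forall₂_congr fun C hC =>
    sat_reduct_nnWC_nnExtension fun a ha hnew => mem_QSet_of_mem_atoms_nnWC hR hC hnew ha

theorem choiceRule_satReduct_nnExtension {R : WRule ℕ} (hR : R ∈ Ω) {l : Lit ℕ}
    (hl : l ∈ posElems R.head.S) :
    (choiceRule R l).SatReduct (nnExtension Ω Y Z) (nnExtension Ω Z Z) ↔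
      (R.BodySatReduct Y Z → l ∈ Z → l ∈ Y) := by
  refine (imp_congr (sat_reduct_body_nnExtension hR _) map_base_mem_nnExtension).trans ?_
  rw [Formula.sat_reduct_naf_s5, sat_atomFml, pos_qnot_mem_nnExtension,
    and_iff_right (qnot_mem_QSet hR hl), not_not, and_imp]
  exact imp.swap

theorem lowerBoundRule_satReduct_nnExtension {R : WRule ℕ} (hR : R ∈ Ω) :
    (lowerBoundRule R).SatReduct (nnExtension Ω Y Z) (nnExtension Ω Z Z) ↔
      (R.BodySatReduct Y Z → R.head.L ≤ (weightSum Z R.head.S : EReal)) := by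
  refine (not_congr (sat_reduct_body_nnExtension hR _)).trans ?_
  rw [Formula.sat_reduct_naf_s5, sat_atomFml, pos_qle_mem_nnExtension,
    and_iff_right (qle_head_mem_QSet hR), reductWeightSum_self, not_and', not_not]

theorem upperBoundRule_satReduct_nnExtension {R : WRule ℕ} (hR : R ∈ Ω) :
    (upperBoundRule R).SatReduct (nnExtension Ω Y Z) (nnExtension Ω Z Z) ↔
      (R.BodySatReduct Y Z → (reductWeightSum Y Z R.head.S : EReal) ≤ R.head.U) := by
  refine (not_congr (sat_reduct_body_nnExtension hR _)).trans ?_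
  rw [sat_reduct_atomFml, pos_qlt_mem_nnExtension, and_iff_right (qlt_head_mem_QSet hR), not_and',
    not_lt]

theorem progSat_nnExtension_iff_hornSat :
    progSat (nnExtension Ω Y Z) (progReduct (nnExtension Ω Z Z) (nnTrans Ω)) ↔
      hornSat Y (wProgReduct Z Ω) ∧ ∀ R ∈ Ω, R.BodySatReduct Y Z →
        R.head.L ≤ (weightSum Z R.head.S : EReal) ∧
          (reductWeightSum Y Z R.head.S : EReal) ≤ R.head.U := by
  have h := progSat_nnExtension_iff_basicRules (Ω := Ω) (Y := Y) (B := nnExtension Ω Z Z)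
  rw [preimage_nnExtension] at h
  rw [h, hornSat_wProgReduct_iff, ← forall₂_and]
  refine forall₂_congr fun R hR => ?_
  rw [lowerBoundRule_satReduct_nnExtension hR, upperBoundRule_satReduct_nnExtension hR,
    imp_and]
  have hchoice {l : Lit ℕ} (hl : l ∈ posElems R.head.S) :=
    choiceRule_satReduct_nnExtension (Y := Y) (Z := Z) hR hl
  exact and_congr_left' ⟨fun h hb l hl => (hchoice hl).1 (h l hl) hb,
    fun h l hl => (hchoice hl).2 fun hb => h hb l hl⟩

theorem progSat_nnExtension_self_iff :
    progSat (nnExtension Ω Z Z) (progReduct (nnExtension Ω Z Z) (nnTrans Ω)) ↔ wProgSat Z Ω := by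
  simp only [progSat_nnExtension_iff_hornSat, hornSat_wProgReduct_self, true_and,
    reductWeightSum_self, WRule.bodySatReduct_self]
  rfl

theorem wProgSat.progSat_nnExtension (hZ : wProgSat Z Ω) (h : Y ⊆ Z)
    (hY : hornSat Y (wProgReduct Z Ω)) :
    progSat (nnExtension Ω Y Z) (progReduct (nnExtension Ω Z Z) (nnTrans Ω)) := by
  refine progSat_nnExtension_iff_hornSat.2 ⟨hY, fun R hR hb => ?_⟩
  obtain ⟨hL, hU⟩ := hZ R hR (WRule.bodySatReduct_self.1 (hb.mono h))
  rw [← reductWeightSum_self] at hU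
  exact ⟨hL, (EReal.coe_le_coe_iff.2 (reductWeightSum_mono h R.head.nonneg)).trans hU⟩

theorem hornSat_preimage_of_progSat
    (hA : progSat A (progReduct (nnExtension Ω Z Z) (nnTrans Ω))) :
    hornSat (Lit.map .base ⁻¹' A) (wProgReduct Z Ω) := by
  have hext := nnExtension_subset_of_progSat hA
  rw [preimage_nnExtension] at hext
  refine hornSat_wProgReduct_iff.2 fun R hR hb l hl hlZ => ?_
  refine progSat_progReduct_iff.1 hA _ (choiceRule_mem_nnTrans hR hl) ?_
  refine Formula.sat_reduct_mono hext _ ((sat_reduct_body_nnExtension hR _).2 ⟨?_, hb⟩)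
  exact (Formula.sat_reduct_naf_s5 _).2 fun h => (pos_qnot_mem_nnExtension.1 h).2 hlZ

theorem answerSet_nnExtension_iff :
    AnswerSet (nnExtension Ω Z Z) (nnTrans Ω) ↔ WAnswerSet Z Ω := by
  constructor
  · intro h
    have hZ : wProgSat Z Ω := progSat_nnExtension_self_iff.1 h.2.1
    have hcl : cl (wProgReduct Z Ω) ⊆ Z := Set.sInter_subset_of_mem hornSat_wProgReduct_self
    refine ⟨litConsistent_nnExtension_iff.1 h.1, hZ, hcl.antisymm ?_⟩
    have hsub := h.subset_of_progSat (hZ.progSat_nnExtension hcl hornSat_cl_wProgReduct)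
      (nnExtension_mono hcl)
    exact fun l hl => map_base_mem_nnExtension.1 (hsub (map_base_mem_nnExtension.2 hl))
  · rintro ⟨hcons, hZ, hcl⟩
    refine ⟨litConsistent_nnExtension_iff.2 hcons, progSat_nnExtension_self_iff.2 hZ,
      fun A _ hA hsub => hsub.antisymm ?_⟩
    have hZA : Z ⊆ Lit.map .base ⁻¹' A :=
      hcl.superset.trans (Set.sInter_subset_of_mem (hornSat_preimage_of_progSat hA))
    have hext := nnExtension_subset_of_progSat hA
    rw [preimage_nnExtension] at hext
    exact (nnExtension_mono hZA).trans hext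

theorem AnswerSet.eq_nnExtension (hA : AnswerSet A (nnTrans Ω)) :
    A = nnExtension Ω (Lit.map .base ⁻¹' A) (Lit.map .base ⁻¹' A) := by
  have hext := nnExtension_subset_of_progSat hA.2.1
  have hsat := progSat_progReduct_iff.1 hA.2.1
  refine (hA.subset_of_progSat (progSat_nnExtension_iff_basicRules.2 fun R hR => ?_) hext).antisymm
    hext
  refine ⟨fun l hl hb => map_base_mem_nnExtension.2 ?_, fun hb => ?_, fun hb => ?_⟩
  · exact hsat _ (choiceRule_mem_nnTrans hR hl) (Formula.sat_reduct_mono hext _ hb)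
  · exact hsat _ (lowerBoundRule_mem_nnTrans hR) (Formula.sat_reduct_mono hext _ hb)
  · exact hsat _ (upperBoundRule_mem_nnTrans hR) (Formula.sat_reduct_mono hext _ hb)

theorem setOf_answerSet_nnTrans :
    {A | AnswerSet A (nnTrans Ω)} = (fun Z => nnExtension Ω Z Z) '' {Z | WAnswerSet Z Ω} := by
  ext A
  constructor
  · intro hA
    have hext := AnswerSet.eq_nnExtension hA
    exact ⟨Lit.map .base ⁻¹' A, answerSet_nnExtension_iff.1 (hext ▸ hA), hext.symm⟩
  · rintro ⟨Z, hZ, rfl⟩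
    exact answerSet_nnExtension_iff.2 hZ

end Extension

/-- Theorem 2: `Z ↦ Z ∖ Q_Ω` is a bijection from the answer sets of `[Ω]^{nn}` onto the
answer sets of `Ω` (the latter viewed over the extended vocabulary via `base`). -/
theorem nn_translation_bijection (Ω : Set (WRule ℕ)) :
    Set.BijOn (fun Z : Set (Lit AtomX) => {l ∈ Z | l.atom ∉ QSet Ω})
      {Z : Set (Lit AtomX) | AnswerSet Z (nnTrans Ω)}
      {Z : Set (Lit AtomX) |
        ∃ Z₀ : Set (Lit ℕ), WAnswerSet Z₀ Ω ∧ Z = Lit.map AtomX.base '' Z₀} := by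
  have hstrip (Z : Set (Lit ℕ)) :
      {l ∈ nnExtension Ω Z Z | l.atom ∉ QSet Ω} = Lit.map AtomX.base '' Z :=
    sep_atom_notMem_QSet_nnExtension
  rw [setOf_answerSet_nnTrans]
  refine ⟨?_, ?_, ?_⟩
  · rintro _ ⟨Z, hZ, rfl⟩
    exact ⟨Z, hZ, hstrip Z⟩
  · rintro _ ⟨Z, -, rfl⟩ _ ⟨Z', -, rfl⟩ h
    have himage : Lit.map AtomX.base '' Z = Lit.map AtomX.base '' Z' := by
      rw [← hstrip, ← hstrip]
      exact h
    rw [Lit.map_base_injective.image_injective himage]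
  · rintro _ ⟨Z, hZ, rfl⟩
    exact ⟨nnExtension Ω Z Z, ⟨Z, hZ, rfl⟩, hstrip Z⟩
end
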